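/- arXiv:2206.13851 — 5 statements merged into one kernel-verified Lean document; each statement's English description precedes it below -/
import Mathlib

section
/- Let K ≥ 2 be a natural number and let a, b be natural numbers with b ≥ K^3 and K·b > a. Set a' := ⌊a/K⌋, b' := ⌈b/K⌉ and q := ⌊a'/b'⌋. Then (q : ℝ) ≤ (a : ℝ)/(b : ℝ) < q + 2; in particular the Euclidean quotient ⌊a/b⌋ equals q or q + 1. -/
/-- Lemma 4.2(1) (first "recursive" lemma, item 1): for `K ≥ 2`, `b ≥ K³` and `K·b > a`,
setting `a' := ⌊a/K⌋`, `b' := ⌈b/K⌉` and `q := ⌊a'/b'⌋`, we have `q ≤ a/b < q + 2`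
(over the reals), hence `⌊a/b⌋ = q` or `⌊a/b⌋ = q + 1`. -/
theorem stmt0 (K a b : ℕ) (hK : 2 ≤ K) (hb : K ^ 3 ≤ b) (hab : a < K * b) :
    let a' := a / K
    let b' := ⌈(b : ℚ) / (K : ℚ)⌉₊
    let q := a' / b'
    ((q : ℝ) ≤ (a : ℝ) / (b : ℝ) ∧ (a : ℝ) / (b : ℝ) < (q : ℝ) + 2) ∧
      (a / b = q ∨ a / b = q + 1) := by
  intro a' b' q
  have hK0 : 0 < K := by omega
  have hb0 : 0 < b := lt_of_lt_of_le (by positivity) hb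
  have hKq : (0 : ℚ) < K := by exact_mod_cast hK0
  have h1 : b ≤ K * b' := by
    have h : (b : ℚ) / K ≤ b' := Nat.le_ceil _
    rw [div_le_iff₀ hKq] at h
    have h' : b ≤ b' * K := by exact_mod_cast h
    linarith
  have h2 : K * b' < b + K := by
    have h : (b' : ℚ) < (b : ℚ) / K + 1 := Nat.ceil_lt_add_one (by positivity)
    have e : ((b : ℚ) / K + 1) * K = b + K := by field_simp
    have h3 : (b' : ℚ) * K < b + K := by
      rw [← e]
      exact mul_lt_mul_of_pos_right h hKq
    have h' : b' * K < b + K := by exact_mod_cast h3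
    linarith
  have hb' : 0 < b' := by
    rcases Nat.eq_zero_or_pos b' with h | h
    · rw [h] at h1
      omega
    · exact h
  have h3 : q * b' ≤ a' := Nat.div_mul_le_self _ _
  have h4 : a' * K ≤ a := Nat.div_mul_le_self _ _
  have h5 : a < K * (a' + 1) := Nat.lt_mul_div_succ a hK0
  have h6 : a' + 1 ≤ b' * (q + 1) := Nat.lt_mul_div_succ a' hb'
  clear_value q b' a'
  have lo : q * b ≤ a := by
    calc q * b ≤ q * (K * b') := Nat.mul_le_mul_left _ h1
      _ = (q * b') * K := by ring
      _ ≤ a' * K := Nat.mul_le_mul_right _ h3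
      _ ≤ a := h4
  have hq : q + 1 ≤ K := by
    have : q * b < K * b := lt_of_le_of_lt lo hab
    exact Nat.lt_of_mul_lt_mul_right this
  have h7 : K * (q + 1) ≤ b := by
    calc K * (q + 1) ≤ K * K := Nat.mul_le_mul_left _ hq
      _ = K ^ 2 := by ring
      _ ≤ K ^ 3 := Nat.pow_le_pow_right hK0 (by norm_num)
      _ ≤ b := hb
  have hi : a < (q + 2) * b := by
    calc a < K * (a' + 1) := h5
      _ ≤ K * (b' * (q + 1)) := Nat.mul_le_mul_left _ h6
      _ = (K * b') * (q + 1) := by ring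
      _ ≤ (b + K) * (q + 1) := Nat.mul_le_mul_right _ h2.le
      _ = b * (q + 1) + K * (q + 1) := by ring
      _ ≤ b * (q + 1) + b := Nat.add_le_add_left h7 _
      _ = (q + 2) * b := by ring
  have hbr : (0 : ℝ) < b := by exact_mod_cast hb0
  refine ⟨⟨?_, ?_⟩, ?_⟩
  · rw [le_div_iff₀ hbr]
    exact_mod_cast lo
  · rw [div_lt_iff₀ hbr]
    exact_mod_cast hi
  · have l := (Nat.le_div_iff_mul_le hb0).2 lo
    have u := (Nat.div_lt_iff_lt_mul hb0).2 hi
    omega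
end

section
/- For every real number a ≥ 0 and every integer c ≥ 1, one has (a + 1)^c + 1 ≤ (a + (c+1)/c)^c. -/
/-- For every real `a ≥ 0` and every integer `c ≥ 1`:
`(a + 1)^c + 1 ≤ (a + (c+1)/c)^c`. -/
theorem stmt7 (a : ℝ) (ha : 0 ≤ a) (c : ℕ) (hc : 1 ≤ c) :
    (a + 1) ^ c + 1 ≤ (a + ((c : ℝ) + 1) / (c : ℝ)) ^ c := by
  have hc0 : (0 : ℝ) < c := by exact_mod_cast hc
  have hx : (0 : ℝ) < a + 1 := by linarith
  have hnn : (0 : ℝ) ≤ 1 / ((c : ℝ) * (a + 1)) := by positivity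
  have hb := one_add_mul_le_pow (a := 1 / ((c : ℝ) * (a + 1))) (by linarith) c
  have e : a + ((c : ℝ) + 1) / (c : ℝ) = (a + 1) * (1 + 1 / ((c : ℝ) * (a + 1))) := by
    field_simp
    ring
  have e2 : (c : ℝ) * (1 / ((c : ℝ) * (a + 1))) = 1 / (a + 1) := by
    field_simp
  rw [e2] at hb
  rw [e, mul_pow]
  obtain ⟨k, rfl⟩ : ∃ k, c = k + 1 := ⟨c - 1, by omega⟩
  have h1 : (1 : ℝ) ≤ (a + 1) ^ k := one_le_pow₀ (by linarith)
  have h2 : (a + 1) ^ (k + 1) * (1 + 1 / (a + 1)) = (a + 1) ^ (k + 1) + (a + 1) ^ k := by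
    rw [pow_succ]
    field_simp
  calc (a + 1) ^ (k + 1) + 1 ≤ (a + 1) ^ (k + 1) * (1 + 1 / (a + 1)) := by
        rw [h2]; linarith
    _ ≤ _ := mul_le_mul_of_nonneg_left hb (by positivity)
end

section
/- Let d ≥ 1 be a natural number and let λ, L be natural numbers with λ² > d²·L. Let y be a natural number with λ ≤ y ≤ L which is not of the form p·q for a prime number p and a natural number q ≤ d. Then y has a divisor y₁ with d < y₁ < λ. -/
/-- Lemma on the "forbidden form": for `d ≥ 1`, `λ² > d²·L`, and `λ ≤ y ≤ L` such that
`y` is not of the form `p·q` with `p` prime and `q ≤ d`, there is a divisor `y₁` of `y`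
with `d < y₁ < λ`. -/
theorem stmt12 (d lam L y : ℕ) (hd : 1 ≤ d) (hlam : d ^ 2 * L < lam ^ 2)
    (hy1 : lam ≤ y) (hy2 : y ≤ L)
    (hform : ¬ ∃ p q : ℕ, p.Prime ∧ q ≤ d ∧ y = p * q) :
    ∃ y₁ : ℕ, y₁ ∣ y ∧ d < y₁ ∧ y₁ < lam := by
  classical
  have hL : lam ≤ L := hy1.trans hy2
  have h1 : d ^ 2 < lam := by
    by_contra! h
    nlinarith [Nat.mul_le_mul h hL]
  have hd2 : d ≤ d ^ 2 := by nlinarith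
  have hex : ∃ m, m ∣ y ∧ d < m := ⟨y, dvd_rfl, by omega⟩
  obtain ⟨hm, hdm⟩ := Nat.find_spec hex
  have hmin : ∀ k, k ∣ y → d < k → Nat.find hex ≤ k :=
    fun k hk hk' => Nat.find_min' hex ⟨hk, hk'⟩
  generalize Nat.find hex = m at hm hdm hmin
  refine ⟨m, hm, hdm, ?_⟩
  by_cases hp : m.Prime
  · by_contra! hlm
    obtain ⟨c, hc⟩ := hm
    have hcd : d < c := by
      by_contra! h
      exact hform ⟨m, c, hp, h, hc⟩
    have hmc : m ≤ c := hmin c ⟨m, by rw [hc, mul_comm]⟩ hcd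
    have h2 : lam * lam ≤ m * c := Nat.mul_le_mul hlm (hlm.trans hmc)
    have h3 : 1 * L ≤ d ^ 2 * L := Nat.mul_le_mul_right L (hd.trans hd2)
    nlinarith
  · obtain ⟨a, ham, ha2, ha3⟩ := Nat.exists_dvd_of_not_prime2 (by omega) hp
    obtain ⟨b, hb⟩ := ham
    have hbm : b < m := by
      rcases Nat.eq_zero_or_pos b with h | h
      · omega
      · nlinarith
    have had : a ≤ d := by
      by_contra! h
      have := hmin a (Dvd.dvd.trans ⟨b, hb⟩ hm) h
      omega
    have hbd : b ≤ d := by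
      by_contra! h
      have := hmin b (Dvd.dvd.trans ⟨a, by rw [hb, mul_comm]⟩ hm) h
      omega
    have := Nat.mul_le_mul had hbd
    nlinarith
end

section
/- Let K, A, B, a, b, m, n be natural numbers with K ≥ 2, A > B ≥ 1, m ≥ n, a > b ≥ 1, a·K^m ≤ A < (a+1)·K^m, b·K^n ≤ B < (b+1)·K^n, and suppose (a : ℝ)/(b·(b+1)) + 1/b ≤ 1. Then, letting q₀ := ⌊a/(b+1)⌋, there exists q ∈ {q₀, q₀ + 1} with q ≥ 1 such that (q : ℝ)·K^(m−n) ≤ (A : ℝ)/(B : ℝ) < (q+1)·K^(m−n); consequently, writing R := A − B·q·K^(m−n), one has R < B·K^(m−n) and ⌊A/B⌋ = q·K^(m−n) + ⌊R/B⌋. -/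
/-- Appendix division lemma: under the stated hypotheses on `K, A, B, a, b, m, n`,
with `q₀ := ⌊a/(b+1)⌋` there is `q ∈ {q₀, q₀+1}`, `q ≥ 1`, with
`q·K^(m−n) ≤ A/B < (q+1)·K^(m−n)` over the reals; consequently, for
`R := A − B·q·K^(m−n)` one has `R < B·K^(m−n)` and `⌊A/B⌋ = q·K^(m−n) + ⌊R/B⌋`. -/
theorem stmt13 (K A B a b m n : ℕ) (hK : 2 ≤ K) (hBA : B < A) (hB : 1 ≤ B)
    (hmn : n ≤ m) (hba : b < a) (hb : 1 ≤ b)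
    (hA1 : a * K ^ m ≤ A) (hA2 : A < (a + 1) * K ^ m)
    (hB1 : b * K ^ n ≤ B) (hB2 : B < (b + 1) * K ^ n)
    (hfrac : (a : ℝ) / ((b : ℝ) * ((b : ℝ) + 1)) + 1 / (b : ℝ) ≤ 1) :
    ∃ q : ℕ, (q = a / (b + 1) ∨ q = a / (b + 1) + 1) ∧ 1 ≤ q ∧
      (q : ℝ) * (K : ℝ) ^ (m - n) ≤ (A : ℝ) / (B : ℝ) ∧
      (A : ℝ) / (B : ℝ) < ((q : ℝ) + 1) * (K : ℝ) ^ (m - n) ∧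
      A - B * q * K ^ (m - n) < B * K ^ (m - n) ∧
      A / B = q * K ^ (m - n) + (A - B * q * K ^ (m - n)) / B := by
  have hf : a + (b + 1) ≤ b * (b + 1) := by
    have hb0 : (0 : ℝ) < b := by exact_mod_cast hb
    have e : (a : ℝ) / ((b : ℝ) * ((b : ℝ) + 1)) + 1 / (b : ℝ)
        = ((a : ℝ) + (b + 1)) / ((b : ℝ) * ((b : ℝ) + 1)) := by
      field_simp
    rw [e, div_le_one (by positivity)] at hfrac
    exact_mod_cast hfrac
  have hKm : K ^ m = K ^ n * K ^ (m - n) := by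
    rw [← pow_add, Nat.add_sub_cancel' hmn]
  have hM : 0 < K ^ (m - n) := by positivity
  have hN : 0 < K ^ n := by positivity
  rw [hKm] at hA1 hA2
  have hcast : (K : ℝ) ^ (m - n) = ((K ^ (m - n) : ℕ) : ℝ) := by push_cast; rfl
  rw [hcast]
  generalize K ^ (m - n) = M at *
  generalize K ^ n = N at *
  have hBM : 0 < B * M := Nat.mul_pos hB hM
  have h0 : a / (b + 1) * (b + 1) ≤ a := Nat.div_mul_le_self a (b + 1)
  have h1 : a < (a / (b + 1) + 1) * (b + 1) := by
    have := Nat.lt_mul_div_succ a (Nat.succ_pos b)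
    rw [mul_comm]; exact this
  have hq1 : 1 ≤ a / (b + 1) := (Nat.one_le_div_iff (Nat.succ_pos b)).2 hba
  generalize a / (b + 1) = q0 at *
  have hq0b : q0 + 1 ≤ b := by
    refine Nat.le_of_mul_le_mul_right (c := b + 1) ?_ (Nat.succ_pos b)
    linarith
  have hlo : q0 ≤ A / (B * M) := by
    rw [Nat.le_div_iff_mul_le hBM]
    calc q0 * (B * M) ≤ q0 * (((b + 1) * N) * M) := by gcongr
      _ = (q0 * (b + 1)) * (N * M) := by ring
      _ ≤ a * (N * M) := by gcongr
      _ ≤ A := hA1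
  have hhi : A / (B * M) < q0 + 2 := by
    rw [Nat.div_lt_iff_lt_mul hBM]
    have h2 : a + 1 ≤ (q0 + 2) * b := by nlinarith
    calc A < (a + 1) * (N * M) := hA2
      _ ≤ ((q0 + 2) * b) * (N * M) := by gcongr
      _ = (q0 + 2) * ((b * N) * M) := by ring
      _ ≤ (q0 + 2) * (B * M) := by gcongr
  have hq3 : A / (B * M) * (B * M) ≤ A := Nat.div_mul_le_self _ _
  have hq4 : A < (A / (B * M) + 1) * (B * M) := by
    have := Nat.lt_mul_div_succ A hBM
    rw [mul_comm]; exact this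
  generalize A / (B * M) = q at *
  have hBr : (0 : ℝ) < B := by exact_mod_cast hB
  have e1 : B * q * M = q * (B * M) := by ring
  refine ⟨q, by omega, by omega, ?_, ?_, ?_, ?_⟩
  · rw [le_div_iff₀ hBr]
    have : q * M * B ≤ A := by linarith
    exact_mod_cast this
  · rw [div_lt_iff₀ hBr]
    have : A < (q + 1) * M * B := by linarith
    exact_mod_cast this
  · rw [e1]
    have : (q + 1) * (B * M) = q * (B * M) + B * M := by ring
    omega
  · have h5 : A = (A - B * q * M) + B * (q * M) := by
      rw [← mul_assoc]; omega
    conv_lhs => rw [h5]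
    rw [Nat.add_mul_div_left _ _ hB, add_comm]
end

section
/- Let i, j be positive integers and K ≥ 2 a natural number. Then i < 2·j holds if and only if for all natural numbers a, b with K^i ≤ a < K^(i+1) and K^j ≤ b < K^(j+1), one has (a : ℝ)/(b·(b+1)) + 1/b ≤ 1. -/
theorem aux14 (a b : ℕ) (hb : 0 < b) :
    (a : ℝ) / ((b : ℝ) * ((b : ℝ) + 1)) + 1 / (b : ℝ) ≤ 1 ↔ a + 1 ≤ b ^ 2 := by
  have hb' : (0 : ℝ) < b := by exact_mod_cast hb
  have h : (a : ℝ) / ((b : ℝ) * ((b : ℝ) + 1)) + 1 / (b : ℝ)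
      = ((a : ℝ) + b + 1) / ((b : ℝ) * ((b : ℝ) + 1)) := by
    field_simp
    ring
  rw [h, div_le_one (by positivity), ← Nat.cast_le (α := ℝ)]
  push_cast
  constructor <;> intro h <;> nlinarith

/-- Lemma characterizing when the division trick applies: for positive integers `i, j`
and `K ≥ 2`, `i < 2·j` iff for all naturals `a ∈ [Kⁱ, Kⁱ⁺¹)` and `b ∈ [Kʲ, Kʲ⁺¹)`,
`a/(b·(b+1)) + 1/b ≤ 1` over the reals. -/
theorem stmt14 (i j K : ℕ) (hi : 1 ≤ i) (hj : 1 ≤ j) (hK : 2 ≤ K) :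
    i < 2 * j ↔
      ∀ a b : ℕ, K ^ i ≤ a → a < K ^ (i + 1) → K ^ j ≤ b → b < K ^ (j + 1) →
        (a : ℝ) / ((b : ℝ) * ((b : ℝ) + 1)) + 1 / (b : ℝ) ≤ 1 := by
  have hp : 0 < K ^ j := Nat.pow_pos (by omega)
  constructor
  · intro hij a b _ ha hb _
    rw [aux14 a b (by omega)]
    calc a + 1 ≤ K ^ (i + 1) := ha
      _ ≤ K ^ (j * 2) := Nat.pow_le_pow_right (by omega) (by omega)
      _ = (K ^ j) ^ 2 := pow_mul K j 2
      _ ≤ b ^ 2 := Nat.pow_le_pow_left hb 2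
  · intro h
    have h1 := h (K ^ i) (K ^ j) le_rfl (Nat.pow_lt_pow_right (by omega) (by omega)) le_rfl
      (Nat.pow_lt_pow_right (by omega) (by omega))
    rw [aux14 _ _ hp, ← pow_mul] at h1
    have h2 : i < j * 2 := (Nat.pow_lt_pow_iff_right (by omega)).1 h1
    omega
end
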